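/- arXiv:math/0607398 — 2 statements merged into one kernel-verified Lean document; each statement's English description precedes it below -/
import Mathlib

section
/- For $1 \le p \le 2$ and any nonzero $z = (z_1, \dots, z_{n+1}) \in \mathbb{R}^{n+1}$, writing $z = (x, y)$ with $x \in \mathbb{R}^n$, the map $T(z) = x/\|z\|_p$ is differentiable at $z$ (away from coordinate hyperplanes) and the operator norm of its adjoint derivative satisfies $\|D^*T(z)\| \le \frac{1}{\|z\|_p}\left(1 + n^{(2-p)/(2p)}\|T(z)\|_2\right)$. -/
open scoped BigOperators

/-!
Write `N` for the `ℓ_p` norm, `g` for its gradient at `z`, `P` for the projection `(x, y) ↦ x` and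
`t = T z`. Then `DT(z) = N⁻¹ (P - t ⊗ g)`, so for every `u` in the target

  `‖N DT(z)* u‖² ≤ ‖u‖² - 2 ⟪t, u⟫ ⟪P g, u⟫ + ⟪t, u⟫² ‖g‖²`.

The triangle inequality would only give the constant `(n + 1) ^ ((2 - p) / (2 p))`. Instead, `P g`
and `t` have coordinatewise equal signs, so `⟪P g, t⟫ ≥ 0`; reflecting `P g` in the line of `u` then
bounds the cross term by `‖P g‖ ‖t‖ ‖u‖²`, half of what Cauchy–Schwarz gives. With
`C = n ^ ((2 - p) / (2 p))`, the saved `C ‖t‖ ‖u‖²` absorbs the contribution to `‖g‖²` of the last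
coordinate.
-/

open ContinuousLinearMap InnerProductSpace Finset
open scoped RealInnerProductSpace

section InnerProductSpace

variable {E F : Type*} [NormedAddCommGroup E] [InnerProductSpace ℝ E]
  [NormedAddCommGroup F] [InnerProductSpace ℝ F]

theorem neg_two_mul_inner_mul_inner_le (a t u : E) :
    -(2 * (⟪a, u⟫ * ⟪t, u⟫)) ≤ (‖a‖ * ‖t‖ - ⟪a, t⟫) * ‖u‖ ^ 2 := by
  rcases eq_or_ne u 0 with rfl | hu
  · simp
  have inner_reflection : ⟪(ℝ ∙ u).reflection a, t⟫ * ‖u‖ ^ 2 =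
      2 * (⟪a, u⟫ * ⟪t, u⟫) - ⟪a, t⟫ * ‖u‖ ^ 2 := by
    rw [Submodule.reflection_singleton_apply, inner_sub_left, ← Nat.cast_smul_eq_nsmul ℝ,
      real_inner_smul_left, real_inner_smul_left, real_inner_comm u a, real_inner_comm t u]
    have : ‖u‖ ≠ 0 := norm_ne_zero_iff.2 hu
    simp only [RCLike.ofReal_real_eq_id, id_eq]
    push_cast
    field_simp
  have neg_le_inner_reflection : -(‖a‖ * ‖t‖) ≤ ⟪(ℝ ∙ u).reflection a, t⟫ := by
    rw [← (ℝ ∙ u).reflection.norm_map a]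
    exact neg_le_of_abs_le (abs_real_inner_le_norm _ _)
  linarith [mul_le_mul_of_nonneg_right neg_le_inner_reflection (sq_nonneg ‖u‖)]

theorem norm_sub_rankOne_le [CompleteSpace E] [CompleteSpace F] {P : E →L[ℝ] F} {g : E} {t : F}
    {C : ℝ} (hP : ‖P‖ ≤ 1) (hPgt : 0 ≤ ⟪P g, t⟫) (hPg : ‖P g‖ ≤ C) (hg : ‖g‖ ^ 2 ≤ 1 + C ^ 2)
    (ht : ‖t‖ ≤ C) :
    ‖P - rankOne ℝ t g‖ ≤ 1 + C * ‖t‖ := by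
  have hC : 0 ≤ C := (norm_nonneg t).trans ht
  rw [← adjoint.norm_map, map_sub, adjoint_rankOne]
  refine opNorm_le_bound _ (by positivity) fun u ↦ ?_
  have norm_adjoint_le : ‖adjoint P u‖ ≤ ‖u‖ := by
    simpa using (adjoint P).le_of_opNorm_le ((adjoint.norm_map P).trans_le hP) u
  have cross_term : -(2 * (⟪P g, u⟫ * ⟪t, u⟫)) ≤ C * ‖t‖ * ‖u‖ ^ 2 :=
    (neg_two_mul_inner_mul_inner_le (P g) t u).trans <| by
      gcongr
      exact (sub_le_self _ hPgt).trans (by gcongr)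
  have inner_sq_le : ⟪t, u⟫ ^ 2 ≤ ‖t‖ ^ 2 * ‖u‖ ^ 2 := by
    rw [← mul_pow]
    exact sq_le_sq.2 ((abs_real_inner_le_norm t u).trans (le_abs_self _))
  have norm_sq_le : ‖t‖ ^ 2 ≤ C * ‖t‖ := by
    rw [sq]
    gcongr
  refine le_of_sq_le_sq ?_ (by positivity)
  calc ‖(adjoint P - rankOne ℝ g t) u‖ ^ 2
      = ‖adjoint P u‖ ^ 2 - 2 * (⟪P g, u⟫ * ⟪t, u⟫) + ⟪t, u⟫ ^ 2 * ‖g‖ ^ 2 := by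
        rw [sub_apply, rankOne_apply, norm_sub_sq_real, real_inner_smul_right, adjoint_inner_left,
          real_inner_comm (P g), norm_smul, mul_pow, Real.norm_eq_abs, sq_abs]
        ring
    _ ≤ ‖u‖ ^ 2 + C * ‖t‖ * ‖u‖ ^ 2 + ‖t‖ ^ 2 * ‖u‖ ^ 2 * (1 + C ^ 2) := by
        rw [sub_eq_add_neg]
        gcongr
    _ = (1 + C * ‖t‖ + ‖t‖ ^ 2 + (C * ‖t‖) ^ 2) * ‖u‖ ^ 2 := by ring
    _ ≤ (1 + C * ‖t‖ + C * ‖t‖ + (C * ‖t‖) ^ 2) * ‖u‖ ^ 2 := by gcongr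
    _ = ((1 + C * ‖t‖) * ‖u‖) ^ 2 := by ring

theorem hasFDerivAt_inv_smul_of_hasGradientAt [CompleteSpace E] {N : E → ℝ} {g z : E}
    (P : E →L[ℝ] F) (hN : HasGradientAt N g z) (hNz : N z ≠ 0) :
    HasFDerivAt (fun y ↦ (N y)⁻¹ • P y)
      ((N z)⁻¹ • (P - rankOne ℝ ((N z)⁻¹ • P z) g)) z := by
  have hasFDerivAt_inv : HasFDerivAt (fun y ↦ (N y)⁻¹) (-(N z ^ 2)⁻¹ • toDual ℝ E g) z :=
    (hasDerivAt_inv hNz).comp_hasFDerivAt z hN.hasFDerivAt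
  refine (hasFDerivAt_inv.smul P.hasFDerivAt).congr_fderiv ?_
  ext h
  simp only [add_apply, smul_apply, smulRight_apply, sub_apply, rankOne_apply,
    toDual_apply_apply, smul_sub, smul_smul, smul_eq_mul]
  module

end InnerProductSpace

section Real

theorem hasDerivAt_abs_rpow_of_ne_zero_or_one_lt {x p : ℝ} (h : x ≠ 0 ∨ 1 < p) :
    HasDerivAt (fun t : ℝ ↦ |t| ^ p) (p * (SignType.sign x * |x| ^ (p - 1))) x := by
  rcases eq_or_ne x 0 with rfl | hx
  · simpa using hasDerivAt_abs_rpow 0 (h.resolve_left (not_not.2 rfl))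
  · convert (hasDerivAt_abs hx).rpow_const (p := p) (Or.inl (abs_ne_zero.2 hx)) using 1
    ring

theorem sum_rpow_le_card_rpow_mul_rpow_sum {ι : Type*} (s : Finset ι) {a : ι → ℝ}
    (ha : ∀ i, 0 ≤ a i) {p q : ℝ} (hq : 0 ≤ q) (hqp : q ≤ p) :
    ∑ i ∈ s, a i ^ q ≤ (#s : ℝ) ^ (1 - q / p) * (∑ i ∈ s, a i ^ p) ^ (q / p) := by
  rcases hq.eq_or_lt with rfl | hq
  · simp
  have rpow_rpow_div (i : ι) : (a i ^ q) ^ (p / q) = a i ^ p := by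
    rw [← Real.rpow_mul (ha i), mul_div_cancel₀ _ hq.ne']
  simpa [rpow_rpow_div] using Real.inner_le_weight_mul_Lp_of_nonneg s ((one_le_div hq).2 hqp) 1
    (fun i ↦ a i ^ q) (fun _ ↦ zero_le_one) (fun i ↦ Real.rpow_nonneg (ha i) q)

end Real

section CoordRestrict

variable {ι κ : Type*}

/-- The restriction `z ↦ z ∘ e` of Euclidean vectors along a map `e` of index sets. For
`e = Fin.castSucc` it is the projection `(x, y) ↦ x` of `ℝⁿ⁺¹` onto `ℝⁿ`. -/
noncomputable def coordRestrict (e : κ → ι) : EuclideanSpace ℝ ι →L[ℝ] EuclideanSpace ℝ κ :=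
  (EuclideanSpace.equiv κ ℝ).symm.toContinuousLinearMap ∘L .pi fun k ↦ EuclideanSpace.proj (e k)

@[simp]
theorem coordRestrict_apply (e : κ → ι) (z : EuclideanSpace ℝ ι) (k : κ) :
    coordRestrict e z k = z (e k) :=
  rfl

theorem norm_coordRestrict_apply_sq [Fintype κ] (e : κ ↪ ι) (z : EuclideanSpace ℝ ι) :
    ‖coordRestrict e z‖ ^ 2 = ∑ j ∈ univ.map e, z j ^ 2 := by
  simp [EuclideanSpace.real_norm_sq_eq]

theorem norm_coordRestrict_le_one [Fintype ι] [Fintype κ] (e : κ ↪ ι) : ‖coordRestrict e‖ ≤ 1 := by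
  refine opNorm_le_bound _ zero_le_one fun z ↦ ?_
  rw [one_mul]
  refine le_of_sq_le_sq ?_ (norm_nonneg z)
  rw [norm_coordRestrict_apply_sq, EuclideanSpace.real_norm_sq_eq]
  exact sum_le_univ_sum_of_nonneg fun j ↦ sq_nonneg (z j)

end CoordRestrict

section CoordLpNorm

variable {ι : Type*} [Fintype ι]

/-- The `ℓ_p` norm of a vector of the Euclidean space, as the formula `(∑ |z j| ^ p) ^ (1 / p)` for
a real exponent `p`. -/
noncomputable def coordLpNorm (p : ℝ) (z : EuclideanSpace ℝ ι) : ℝ :=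
  (∑ j, |z j| ^ p) ^ (1 / p)

/-- The gradient of `coordLpNorm p`, with `j`-th entry `± (|z j| / ‖z‖_p) ^ (p - 1)`. The sign
makes the entry vanish where `z j = 0`, also for `p = 1`. -/
noncomputable def coordLpNormGradient (p : ℝ) (z : EuclideanSpace ℝ ι) : EuclideanSpace ℝ ι :=
  WithLp.toLp 2 fun j ↦ SignType.sign (z j) * (|z j| / coordLpNorm p z) ^ (p - 1)

theorem coordLpNormGradient_apply (p : ℝ) (z : EuclideanSpace ℝ ι) (j : ι) :
    coordLpNormGradient p z j = SignType.sign (z j) * (|z j| / coordLpNorm p z) ^ (p - 1) :=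
  rfl

variable {p q : ℝ} {z : EuclideanSpace ℝ ι}

theorem coordLpNorm_nonneg : 0 ≤ coordLpNorm p z := by
  unfold coordLpNorm
  positivity

theorem sum_abs_rpow_pos (hz : z ≠ 0) : 0 < ∑ j, |z j| ^ p := by
  obtain ⟨j, hj⟩ : ∃ j, z j ≠ 0 := by
    contrapose! hz
    ext j
    exact hz j
  exact sum_pos' (fun i _ ↦ by positivity) ⟨j, mem_univ j, by positivity⟩

theorem coordLpNorm_pos (hz : z ≠ 0) : 0 < coordLpNorm p z :=
  Real.rpow_pos_of_pos (sum_abs_rpow_pos hz) _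

theorem abs_div_coordLpNorm_nonneg (j : ι) : 0 ≤ |z j| / coordLpNorm p z :=
  div_nonneg (abs_nonneg _) coordLpNorm_nonneg

theorem coordLpNorm_rpow : coordLpNorm p z ^ q = (∑ j, |z j| ^ p) ^ (q / p) := by
  rw [coordLpNorm, ← Real.rpow_mul (by positivity), one_div_mul_eq_div]

theorem sum_abs_div_coordLpNorm_rpow (hp : p ≠ 0) (hz : z ≠ 0) :
    ∑ j, (|z j| / coordLpNorm p z) ^ p = 1 := by
  simp_rw [Real.div_rpow (abs_nonneg _) coordLpNorm_nonneg, ← sum_div, coordLpNorm_rpow]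
  rw [div_self hp, Real.rpow_one, div_self (sum_abs_rpow_pos hz).ne']

theorem abs_div_coordLpNorm_le_one (hp : 0 < p) (hz : z ≠ 0) (j : ι) :
    |z j| / coordLpNorm p z ≤ 1 := by
  refine (Real.rpow_le_rpow_iff (abs_div_coordLpNorm_nonneg j) zero_le_one hp).1 ?_
  rw [Real.one_rpow, ← sum_abs_div_coordLpNorm_rpow hp.ne' hz]
  exact single_le_sum (fun i _ ↦ Real.rpow_nonneg (abs_div_coordLpNorm_nonneg i) p) (mem_univ j)

theorem sum_abs_div_coordLpNorm_rpow_le (hz : z ≠ 0) (hp : 0 < p) (hq : 0 ≤ q) (hqp : q ≤ p)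
    (s : Finset ι) :
    ∑ j ∈ s, (|z j| / coordLpNorm p z) ^ q ≤ (#s : ℝ) ^ (1 - q / p) := by
  have sum_le_one : ∑ j ∈ s, (|z j| / coordLpNorm p z) ^ p ≤ 1 := by
    rw [← sum_abs_div_coordLpNorm_rpow hp.ne' hz]
    exact sum_le_univ_sum_of_nonneg fun j ↦ Real.rpow_nonneg (abs_div_coordLpNorm_nonneg j) p
  refine (sum_rpow_le_card_rpow_mul_rpow_sum s abs_div_coordLpNorm_nonneg hq hqp).trans ?_
  refine mul_le_of_le_one_right (by positivity) (Real.rpow_le_one ?_ sum_le_one (by positivity))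
  exact sum_nonneg fun j _ ↦ Real.rpow_nonneg (abs_div_coordLpNorm_nonneg j) p

theorem hasGradientAt_coordLpNorm (hp : p ≠ 0) (hz : z ≠ 0) (hzp : ∀ j, z j ≠ 0 ∨ 1 < p) :
    HasGradientAt (coordLpNorm p) (coordLpNormGradient p z) z := by
  have hasFDerivAt_sum : HasFDerivAt (fun y : EuclideanSpace ℝ ι ↦ ∑ j, |y j| ^ p)
      (∑ j, (p * (SignType.sign (z j) * |z j| ^ (p - 1))) • EuclideanSpace.proj (𝕜 := ℝ) j) z :=
    .fun_sum fun j _ ↦ HasDerivAt.comp_hasFDerivAt z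
      (hasDerivAt_abs_rpow_of_ne_zero_or_one_lt (hzp j)) (PiLp.hasFDerivAt_apply 2 z j)
  have sum_pos : 0 < ∑ j, |z j| ^ p := sum_abs_rpow_pos hz
  have rpow_sub_one (j : ι) : (|z j| / coordLpNorm p z) ^ (p - 1) =
      |z j| ^ (p - 1) * (∑ j, |z j| ^ p) ^ (1 / p - 1) := by
    rw [Real.div_rpow (abs_nonneg _) coordLpNorm_nonneg, coordLpNorm_rpow, div_eq_mul_inv,
      ← Real.rpow_neg sum_pos.le, sub_div, div_self hp, neg_sub]
  rw [hasGradientAt_iff_hasFDerivAt]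
  refine (hasFDerivAt_sum.rpow_const (p := 1 / p) (Or.inl sum_pos.ne')).congr_fderiv ?_
  ext h
  simp only [smul_apply, _root_.sum_apply, PiLp.proj_apply, toDual_apply_apply, PiLp.inner_apply,
    RCLike.inner_apply, conj_trivial, coordLpNormGradient_apply, rpow_sub_one, smul_eq_mul, mul_sum]
  refine sum_congr rfl fun j _ ↦ ?_
  field_simp

theorem coordLpNormGradient_sq_le (j : ι) :
    coordLpNormGradient p z j ^ 2 ≤ (|z j| / coordLpNorm p z) ^ (2 * (p - 1)) := by
  rw [coordLpNormGradient_apply, mul_pow, mul_comm 2, Real.rpow_mul (abs_div_coordLpNorm_nonneg j),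
    Real.rpow_two]
  refine mul_le_of_le_one_left (sq_nonneg _) ?_
  rcases SignType.trichotomy (SignType.sign (z j)) with h | h | h <;> simp [h]

theorem coordLpNormGradient_mul_nonneg (j : ι) : 0 ≤ coordLpNormGradient p z j * z j := by
  rw [coordLpNormGradient_apply, mul_right_comm, sign_mul_self]
  exact mul_nonneg (abs_nonneg _) (Real.rpow_nonneg (abs_div_coordLpNorm_nonneg j) _)

theorem sum_abs_div_coordLpNorm_rpow_two_mul_sub_one_le (hp1 : 1 ≤ p) (hp2 : p ≤ 2) (hz : z ≠ 0)
    (s : Finset ι) :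
    ∑ j ∈ s, (|z j| / coordLpNorm p z) ^ (2 * (p - 1)) ≤ (#s : ℝ) ^ ((2 - p) / p) := by
  convert sum_abs_div_coordLpNorm_rpow_le hz (q := 2 * (p - 1)) (by linarith) (by linarith)
    (by linarith) s using 2
  field_simp
  ring

theorem sum_coordLpNormGradient_sq_le (hp1 : 1 ≤ p) (hp2 : p ≤ 2) (hz : z ≠ 0) (s : Finset ι) :
    ∑ j ∈ s, coordLpNormGradient p z j ^ 2 ≤ (#s : ℝ) ^ ((2 - p) / p) :=
  (sum_le_sum fun j _ ↦ coordLpNormGradient_sq_le j).trans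
    (sum_abs_div_coordLpNorm_rpow_two_mul_sub_one_le hp1 hp2 hz s)

theorem norm_coordLpNormGradient_sq_le [DecidableEq ι] (hp1 : 1 ≤ p) (hp2 : p ≤ 2) (hz : z ≠ 0)
    {s : Finset ι} (hs : #sᶜ ≤ 1) :
    ‖coordLpNormGradient p z‖ ^ 2 ≤ 1 + (#s : ℝ) ^ ((2 - p) / p) := by
  have exponent_nonneg : 0 ≤ (2 - p) / p := div_nonneg (by linarith) (by linarith)
  have card_rpow_le_one : (#sᶜ : ℝ) ^ ((2 - p) / p) ≤ 1 :=
    Real.rpow_le_one (by positivity) (by exact_mod_cast hs) exponent_nonneg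
  rw [EuclideanSpace.real_norm_sq_eq, ← sum_compl_add_sum s]
  exact add_le_add ((sum_coordLpNormGradient_sq_le hp1 hp2 hz sᶜ).trans card_rpow_le_one)
    (sum_coordLpNormGradient_sq_le hp1 hp2 hz s)

theorem sum_inv_coordLpNorm_smul_sq_le (hp1 : 1 ≤ p) (hp2 : p ≤ 2) (hz : z ≠ 0) (s : Finset ι) :
    ∑ j ∈ s, ((coordLpNorm p z)⁻¹ • z) j ^ 2 ≤ (#s : ℝ) ^ ((2 - p) / p) := by
  refine (sum_le_sum fun j _ ↦ ?_).trans
    (sum_abs_div_coordLpNorm_rpow_two_mul_sub_one_le hp1 hp2 hz s)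
  calc ((coordLpNorm p z)⁻¹ • z) j ^ 2 = (|z j| / coordLpNorm p z) ^ (2 : ℝ) := by
        rw [Real.rpow_two, div_pow, sq_abs, PiLp.smul_apply, smul_eq_mul, ← div_eq_inv_mul, div_pow]
    _ ≤ (|z j| / coordLpNorm p z) ^ (2 * (p - 1)) :=
        Real.rpow_le_rpow_of_exponent_ge_of_imp (abs_div_coordLpNorm_nonneg j)
          (abs_div_coordLpNorm_le_one (by linarith) hz j) (by linarith) (fun _ h ↦ by linarith)

end CoordLpNorm

theorem norm_coordRestrict_sub_rankOne_le {ι κ : Type*} [Fintype ι] [Fintype κ] (e : κ ↪ ι)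
    (hcard : Fintype.card ι ≤ Fintype.card κ + 1) {p : ℝ} (hp1 : 1 ≤ p) (hp2 : p ≤ 2)
    {z : EuclideanSpace ℝ ι} (hz : z ≠ 0) :
    ‖coordRestrict e -
        rankOne ℝ ((coordLpNorm p z)⁻¹ • coordRestrict e z) (coordLpNormGradient p z)‖ ≤
      1 + (Fintype.card κ : ℝ) ^ ((2 - p) / (2 * p)) *
        ‖(coordLpNorm p z)⁻¹ • coordRestrict e z‖ := by
  classical
  set C : ℝ := (Fintype.card κ : ℝ) ^ ((2 - p) / (2 * p)) with hC
  have C_nonneg : 0 ≤ C := by positivity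
  have C_sq : (#(univ.map e) : ℝ) ^ ((2 - p) / p) = C ^ 2 := by
    rw [card_map, card_univ, hC, ← Real.rpow_mul_natCast (by positivity)]
    congr 1
    push_cast
    field_simp
  have card_compl_le : #(univ.map e)ᶜ ≤ 1 := by
    rw [card_compl, card_map, card_univ]
    lia
  have inner_nonneg : 0 ≤ ⟪coordRestrict e (coordLpNormGradient p z),
      (coordLpNorm p z)⁻¹ • coordRestrict e z⟫ := by
    rw [real_inner_smul_right, PiLp.inner_apply]
    refine mul_nonneg (inv_nonneg.2 coordLpNorm_nonneg) (sum_nonneg fun k _ ↦ ?_)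
    simpa [mul_comm] using coordLpNormGradient_mul_nonneg (p := p) (z := z) (e k)
  have norm_restrict_gradient_le : ‖coordRestrict e (coordLpNormGradient p z)‖ ≤ C := by
    refine le_of_sq_le_sq ?_ C_nonneg
    rw [norm_coordRestrict_apply_sq, ← C_sq]
    exact sum_coordLpNormGradient_sq_le hp1 hp2 hz _
  have norm_gradient_sq_le : ‖coordLpNormGradient p z‖ ^ 2 ≤ 1 + C ^ 2 := by
    rw [← C_sq]
    exact norm_coordLpNormGradient_sq_le hp1 hp2 hz card_compl_le
  have norm_normalized_le : ‖(coordLpNorm p z)⁻¹ • coordRestrict e z‖ ≤ C := by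
    refine le_of_sq_le_sq ?_ C_nonneg
    rw [← map_smul, norm_coordRestrict_apply_sq, ← C_sq]
    exact sum_inv_coordLpNorm_smul_sq_le hp1 hp2 hz _
  exact norm_sub_rankOne_le (norm_coordRestrict_le_one e) inner_nonneg norm_restrict_gradient_le
    norm_gradient_sq_le norm_normalized_le

theorem adjoint_derivative_T_bound_general {ι κ : Type*} [Fintype ι] [Fintype κ] (e : κ ↪ ι)
    (hcard : Fintype.card ι ≤ Fintype.card κ + 1) {p : ℝ} (hp1 : 1 ≤ p) (hp2 : p ≤ 2)
    {T : EuclideanSpace ℝ ι → EuclideanSpace ℝ κ}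
    (hT : ∀ z k, T z k = z (e k) / coordLpNorm p z)
    {z : EuclideanSpace ℝ ι} (hz : z ≠ 0) (hzp : ∀ j, z j ≠ 0 ∨ 1 < p) :
    ∃ L : EuclideanSpace ℝ ι →L[ℝ] EuclideanSpace ℝ κ,
      HasFDerivAt T L z ∧
      ‖adjoint L‖ ≤
        1 / coordLpNorm p z * (1 + (Fintype.card κ : ℝ) ^ ((2 - p) / (2 * p)) * ‖T z‖) := by
  obtain rfl : T = fun z ↦ (coordLpNorm p z)⁻¹ • coordRestrict e z := by
    ext z k
    simp [hT, div_eq_inv_mul]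
  refine ⟨_, hasFDerivAt_inv_smul_of_hasGradientAt (coordRestrict e)
    (hasGradientAt_coordLpNorm (zero_lt_one.trans_le hp1).ne' hz hzp) (coordLpNorm_pos hz).ne', ?_⟩
  rw [adjoint.norm_map, norm_smul, norm_inv, Real.norm_of_nonneg coordLpNorm_nonneg, one_div]
  exact mul_le_mul_of_nonneg_left (norm_coordRestrict_sub_rankOne_le e hcard hp1 hp2 hz)
    (inv_nonneg.2 coordLpNorm_nonneg)

/-- Lemma 1: the map `T(z) = x/‖z‖_p` (where `z = (x,y) ∈ ℝ^{n+1}`,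
`x ∈ ℝⁿ`) is differentiable at every point away from the coordinate hyperplanes,
and the Euclidean operator norm of the adjoint of its derivative satisfies
`‖D*T(z)‖ ≤ (1 + n^{(2-p)/(2p)} ‖T(z)‖₂)/‖z‖_p`. -/
theorem adjoint_derivative_T_bound (n : ℕ) (hn : 1 ≤ n) (p : ℝ) (hp1 : 1 ≤ p) (hp2 : p ≤ 2)
    (T : EuclideanSpace ℝ (Fin (n + 1)) → EuclideanSpace ℝ (Fin n))
    (hT : ∀ z : EuclideanSpace ℝ (Fin (n + 1)), ∀ i : Fin n,
      T z i = z i.castSucc / (∑ j, |z j| ^ p) ^ ((1 : ℝ) / p))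
    (z : EuclideanSpace ℝ (Fin (n + 1))) (hz : ∀ j, z j ≠ 0) :
    ∃ L : EuclideanSpace ℝ (Fin (n + 1)) →L[ℝ] EuclideanSpace ℝ (Fin n),
      HasFDerivAt T L z ∧
      ‖ContinuousLinearMap.adjoint L‖ ≤
        (1 / (∑ j, |z j| ^ p) ^ ((1 : ℝ) / p)) *
          (1 + (n : ℝ) ^ ((2 - p) / (2 * p)) * ‖T z‖) := by
  simpa [coordLpNorm] using adjoint_derivative_T_bound_general Fin.castSuccEmb (by simp) hp1 hp2 hT
    (fun h ↦ hz 0 (by simp [h])) (fun j ↦ Or.inl (hz j))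
end

section
/- Let $\mu$ be a log-concave probability measure on $\mathbb{R}^n$ satisfying, for some $r_0, c > 0$, the tail bound $\mu\{\|x\|_2 \ge r\} \le \exp(-c\, n\, r^p)$ for all $r \ge r_0$, where $1 \le p \le 2$. Then there exist constants $c', C' > 0$ depending only on $c$ and $r_0 n^{(2-p)/(2p)}$ such that every measurable set $A$ with $\mu(A) < \exp(-C' n^{p/2})$ satisfies $\mu^+(A) \ge c' n^{1/p} \mu(A) \log^{1-1/p}(1/\mu(A))$. -/
open MeasureTheory
open scoped Pointwise

/-- Lower Minkowski content of `A` with respect to `μ` (Euclidean distance). -/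
noncomputable def minkContent {E : Type*} [MeasurableSpace E] [PseudoMetricSpace E]
    (μ : Measure E) (A : Set E) : ENNReal :=
  Filter.liminf
    (fun ε : ℝ => (μ {x | Metric.infDist x A ≤ ε} - μ A) / ENNReal.ofReal ε)
    (nhdsWithin 0 (Set.Ioi 0))

/-!
Let `B` be a centred ball of radius `r`. Log-concavity applied to `A ∩ B` and `B` gives
`μ ((1 - t) • (A ∩ B) + t • B) ≥ μ (A ∩ B) ^ (1 - t) * μ B ^ t`. By convexity of `B` the set on the
left stays in `B`, and it lies in the `2rt`-neighbourhood of `A`; differentiating at `t = 0` yields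
`μ⁺(A) ≥ μ (A ∩ B) log (μ B / μ (A ∩ B)) / (2r)`, a form of Bobkov's inequality localised to `B`.
The tail bound makes `μ Bᶜ ≤ μ(A) ^ 2` for `r` of order `(log (1 / μ(A)) / n) ^ (1 / p)`, so that at
least half of the mass of `A` lies in `B`. The smallness of `μ(A)` ensures `r ≥ r₀`, i.e. that the
tail bound is available at this radius.
-/

section RealInequalities

lemma add_mul_log_div_le_rpow_mul_rpow {x m : ℝ} (hx : 0 < x) (hm : 0 < m) (t : ℝ) :
    x + t * (x * Real.log (m / x)) ≤ x ^ (1 - t) * m ^ t := by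
  have hexp : x ^ (1 - t) * m ^ t = x * Real.exp (t * Real.log (m / x)) := by
    rw [Real.rpow_sub hx, Real.rpow_one, mul_comm t, ← Real.rpow_def_of_pos (div_pos hm hx),
      Real.div_rpow hm.le hx.le]
    ring
  calc x + t * (x * Real.log (m / x)) = x * (t * Real.log (m / x) + 1) := by ring
    _ ≤ x * Real.exp (t * Real.log (m / x)) := by gcongr; exact Real.add_one_le_exp _
    _ = x ^ (1 - t) * m ^ t := hexp.symm

lemma mul_log_one_div_le_mul_log_div {a x m : ℝ} (ha : 0 < a) (ha4 : a ≤ 1 / 4)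
    (hx : a / 2 ≤ x) (hxa : x ≤ a) (hm : 1 / 2 ≤ m) :
    a * Real.log (1 / a) / 4 ≤ x * Real.log (m / x) := by
  have hx0 : 0 < x := by linarith
  have hlog4 : Real.log (1 / a) ≥ 2 * Real.log 2 := by
    rw [← Real.log_rpow two_pos]
    exact Real.log_le_log (by positivity) ((le_one_div (by positivity) ha).2 (by norm_num [ha4]))
  have hlog : Real.log (1 / a) / 2 ≤ Real.log (m / x) := calc
    Real.log (1 / a) / 2 ≤ Real.log (1 / a) - Real.log 2 := by linarith
    _ = Real.log (1 / 2 / a) := by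
      rw [← Real.log_div (by positivity) two_ne_zero, div_right_comm]
    _ ≤ Real.log (m / x) := Real.log_le_log (by positivity) (by gcongr)
  have hlog0 : 0 ≤ Real.log (1 / a) := by linarith [Real.log_nonneg one_le_two]
  calc a * Real.log (1 / a) / 4 = a / 2 * (Real.log (1 / a) / 2) := by ring
    _ ≤ x * Real.log (m / x) := by gcongr

lemma mul_rpow_le_rpow_mul_rpow_half {N r K p : ℝ} (hN : 0 < N) (hr : 0 ≤ r) (hp : 0 < p)
    (h : r * N ^ ((2 - p) / (2 * p)) ≤ K) : N * r ^ p ≤ K ^ p * N ^ (p / 2) := by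
  have hNp : N = (N ^ ((2 - p) / (2 * p))) ^ p * N ^ (p / 2) := by
    rw [← Real.rpow_mul hN.le, ← Real.rpow_add hN]
    conv_lhs => rw [← Real.rpow_one N]
    congr 1
    field_simp
    ring
  calc N * r ^ p = (r * N ^ ((2 - p) / (2 * p))) ^ p * N ^ (p / 2) := by
        rw [Real.mul_rpow hr (by positivity)]
        conv_lhs => rw [hNp]
        ring
    _ ≤ K ^ p * N ^ (p / 2) := by gcongr

lemma rpow_le_one_add_rpow {x s t : ℝ} (hx : 0 ≤ x) (hs : 0 ≤ s) (hst : s ≤ t) :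
    x ^ s ≤ (1 + x) ^ t :=
  calc x ^ s ≤ (1 + x) ^ s := Real.rpow_le_rpow hx (by linarith) hs
    _ ≤ (1 + x) ^ t := Real.rpow_le_rpow_of_exponent_le (by linarith) hst

lemma min_one_rpow_le_rpow {x s t : ℝ} (hx : 0 < x) (hs : 0 ≤ s) (hst : s ≤ t) :
    min 1 x ^ t ≤ x ^ s :=
  calc min 1 x ^ t ≤ min 1 x ^ s :=
        Real.rpow_le_rpow_of_exponent_ge (by positivity) (min_le_left 1 x) hst
    _ ≤ x ^ s := Real.rpow_le_rpow (by positivity) (min_le_right 1 x) hs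

end RealInequalities

section MeasureReal

variable {E : Type*} [MeasurableSpace E] {μ : Measure E}

lemma measureReal_inter_sub_le_sub [IsFiniteMeasure μ] {A S B : Set E} (hAS : A ⊆ S)
    (hB : MeasurableSet B) :
    μ.real (S ∩ B) - μ.real (A ∩ B) ≤ μ.real S - μ.real A := by
  have hS := measureReal_inter_add_sdiff (μ := μ) (s := S) hB
  have hA := measureReal_inter_add_sdiff (μ := μ) (s := A) hB
  have hdiff : μ.real (A \ B) ≤ μ.real (S \ B) := measureReal_mono (Set.sdiff_subset_sdiff_left hAS)
  linarith

lemma measureReal_sub_measureReal_compl_le_inter [IsFiniteMeasure μ] (A : Set E) {B : Set E}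
    (hB : MeasurableSet B) : μ.real A - μ.real Bᶜ ≤ μ.real (A ∩ B) := by
  have hA := measureReal_inter_add_sdiff (μ := μ) (s := A) hB
  have hdiff : μ.real (A \ B) ≤ μ.real Bᶜ := measureReal_mono (Set.sdiff_subset_compl A B)
  linarith

lemma ofReal_le_minkContent [PseudoMetricSpace E] [IsFiniteMeasure μ] {A : Set E} {v δ : ℝ}
    (hδ : 0 < δ)
    (h : ∀ ε ∈ Set.Ioo 0 δ, v * ε ≤ μ.real {x | Metric.infDist x A ≤ ε} - μ.real A) :
    ENNReal.ofReal v ≤ minkContent μ A := by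
  refine Filter.le_liminf_of_le (by isBoundedDefault) ?_
  filter_upwards [Ioo_mem_nhdsGT hδ] with ε hε
  rw [← ofReal_measureReal (μ := μ) (s := A), ← ofReal_measureReal (μ := μ),
    ← ENNReal.ofReal_sub _ measureReal_nonneg, ← ENNReal.ofReal_div_of_pos hε.1]
  exact ENNReal.ofReal_le_ofReal ((le_div_iff₀ hε.1).2 (h ε hε))

end MeasureReal

/-- Log-concavity of a measure in the Brunn–Minkowski form. The Minkowski combination
`(1 - t) • A + t • B` need not be measurable; `μ` of it is then the outer measure. -/
def IsLogConcaveMeasure {E : Type*} [Add E] [SMul ℝ E] [MeasurableSpace E] (μ : Measure E) :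
    Prop :=
  ∀ A B : Set E, MeasurableSet A → MeasurableSet B → ∀ t : ℝ, 0 < t → t < 1 →
    μ A ^ (1 - t) * μ B ^ t ≤ μ ((1 - t) • A + t • B)

lemma IsLogConcaveMeasure.measureReal_rpow_mul_rpow_le {E : Type*} [Add E] [SMul ℝ E]
    [MeasurableSpace E] {μ : Measure E} [IsFiniteMeasure μ] (hμ : IsLogConcaveMeasure μ)
    {A B : Set E} (hA : MeasurableSet A) (hB : MeasurableSet B) {t : ℝ} (ht₀ : 0 < t)
    (ht₁ : t < 1) : μ.real A ^ (1 - t) * μ.real B ^ t ≤ μ.real ((1 - t) • A + t • B) := by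
  simpa only [Measure.real, ENNReal.toReal_mul, ← ENNReal.toReal_rpow]
    using ENNReal.toReal_mono (measure_ne_top μ _) (hμ A B hA hB t ht₀ ht₁)

section SeminormedSpace

variable {E : Type*} [SeminormedAddCommGroup E] [NormedSpace ℝ E]

lemma smul_inter_add_smul_subset {A B : Set E} (hB : Convex ℝ B) {d t : ℝ}
    (hd : ∀ x ∈ B, ∀ y ∈ B, dist x y ≤ d) (ht₀ : 0 ≤ t) (ht₁ : t ≤ 1) :
    (1 - t) • (A ∩ B) + t • B ⊆ {x | Metric.infDist x A ≤ t * d} ∩ B := by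
  rintro _ ⟨_, ⟨a, ⟨haA, haB⟩, rfl⟩, _, ⟨b, hb, rfl⟩, rfl⟩
  refine ⟨?_, hB haB hb (sub_nonneg.2 ht₁) ht₀ (sub_add_cancel 1 t)⟩
  calc Metric.infDist ((1 - t) • a + t • b) A ≤ dist ((1 - t) • a + t • b) a :=
        Metric.infDist_le_dist_of_mem haA
    _ = t * dist b a := by
        rw [dist_eq_norm, show (1 - t) • a + t • b - a = t • (b - a) by module, norm_smul,
          Real.norm_of_nonneg ht₀, dist_eq_norm]
    _ ≤ t * d := by gcongr; exact hd b hb a haB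

variable [MeasurableSpace E] {μ : Measure E}

namespace IsLogConcaveMeasure

theorem ofReal_mul_log_div_le_minkContent [IsFiniteMeasure μ] (hμ : IsLogConcaveMeasure μ)
    {A B : Set E} (hA : MeasurableSet A) (hBm : MeasurableSet B) (hB : Convex ℝ B) {d : ℝ}
    (hd₀ : 0 < d) (hd : ∀ x ∈ B, ∀ y ∈ B, dist x y ≤ d) :
    ENNReal.ofReal (μ.real (A ∩ B) * Real.log (μ.real B / μ.real (A ∩ B)) / d) ≤
      minkContent μ A := by
  rcases (measureReal_nonneg (μ := μ) (s := A ∩ B)).eq_or_lt with hAB₀ | hAB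
  · simp [← hAB₀]
  have hB₀ : 0 < μ.real B := hAB.trans_le (measureReal_mono Set.inter_subset_right)
  refine ofReal_le_minkContent hd₀ fun ε hε => ?_
  set S : Set E := {x | Metric.infDist x A ≤ ε}
  have hAS : A ⊆ S := fun x hx => (Metric.infDist_zero_of_mem hx).trans_le hε.1.le
  have ht₀ : 0 < ε / d := div_pos hε.1 hd₀
  have ht₁ : ε / d < 1 := (div_lt_one hd₀).2 hε.2
  have hsub : (1 - ε / d) • (A ∩ B) + (ε / d) • B ⊆ S ∩ B := by
    simpa only [div_mul_cancel₀ ε hd₀.ne'] using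
      smul_inter_add_smul_subset (A := A) hB hd ht₀.le ht₁.le
  have hgain : μ.real (A ∩ B) + ε / d * (μ.real (A ∩ B) * Real.log (μ.real B / μ.real (A ∩ B))) ≤
      μ.real (S ∩ B) :=
    calc _ ≤ μ.real (A ∩ B) ^ (1 - ε / d) * μ.real B ^ (ε / d) :=
          add_mul_log_div_le_rpow_mul_rpow hAB hB₀ _
      _ ≤ μ.real ((1 - ε / d) • (A ∩ B) + (ε / d) • B) :=
          hμ.measureReal_rpow_mul_rpow_le (hA.inter hBm) hBm ht₀ ht₁
      _ ≤ μ.real (S ∩ B) := measureReal_mono hsub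
  calc _ = ε / d * (μ.real (A ∩ B) * Real.log (μ.real B / μ.real (A ∩ B))) := by ring
    _ ≤ μ.real (S ∩ B) - μ.real (A ∩ B) := by linarith
    _ ≤ μ.real S - μ.real A := measureReal_inter_sub_le_sub hAS hBm

variable [OpensMeasurableSpace E] [IsProbabilityMeasure μ]

theorem ofReal_mul_log_div_radius_le_minkContent (hμ : IsLogConcaveMeasure μ) {A : Set E}
    (hA : MeasurableSet A) (hA₀ : 0 < μ.real A) (hA₄ : μ.real A ≤ 1 / 4) {r : ℝ} (hr : 0 < r)
    (htail : μ.real (Metric.ball 0 r)ᶜ ≤ μ.real A ^ 2) :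
    ENNReal.ofReal (μ.real A * Real.log (1 / μ.real A) / (8 * r)) ≤ minkContent μ A := by
  set B : Set E := Metric.ball 0 r
  have hBm : MeasurableSet B := measurableSet_ball
  have hdist : ∀ x ∈ B, ∀ y ∈ B, dist x y ≤ 2 * r := fun x hx y hy => by
    linarith [dist_triangle_right x y 0, Metric.mem_ball.1 hx, Metric.mem_ball.1 hy]
  have hB : 1 / 2 ≤ μ.real B := by
    nlinarith [probReal_compl_eq_one_sub (μ := μ) hBm]
  have hAB : μ.real A / 2 ≤ μ.real (A ∩ B) := by
    nlinarith [measureReal_sub_measureReal_compl_le_inter (μ := μ) A hBm]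
  have hentropy := mul_log_one_div_le_mul_log_div hA₀ hA₄ hAB
    (measureReal_mono Set.inter_subset_left) hB
  refine (ENNReal.ofReal_le_ofReal ?_).trans
    (hμ.ofReal_mul_log_div_le_minkContent hA hBm (convex_ball 0 r) (by positivity) hdist)
  calc μ.real A * Real.log (1 / μ.real A) / (8 * r)
      = μ.real A * Real.log (1 / μ.real A) / 4 / (2 * r) := by ring
    _ ≤ μ.real (A ∩ B) * Real.log (μ.real B / μ.real (A ∩ B)) / (2 * r) := by gcongr

theorem ofReal_mul_log_rpow_le_minkContent_of_tail (hμ : IsLogConcaveMeasure μ) {b p r₀ : ℝ}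
    (hb : 0 < b) (hp : 0 < p) (hr₀ : 0 ≤ r₀)
    (htail : ∀ r, r₀ ≤ r → μ {x | r ≤ ‖x‖} ≤ ENNReal.ofReal (Real.exp (-(b * r ^ p))))
    {A : Set E} (hA : MeasurableSet A) (hA₄ : μ.real A ≤ 1 / 4)
    (hAr₀ : μ.real A ≤ Real.exp (-(b * r₀ ^ p / 2))) :
    ENNReal.ofReal ((b / 2) ^ (1 / p) / 8 * μ.real A * Real.log (1 / μ.real A) ^ (1 - 1 / p)) ≤
      minkContent μ A := by
  rcases (measureReal_nonneg (μ := μ) (s := A)).eq_or_lt with hA₀ | hA₀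
  · simp [← hA₀]
  set L := Real.log (1 / μ.real A) with hL
  have hAL : μ.real A = Real.exp (-L) := by
    simp [hL, Real.exp_log hA₀]
  have hL₀ : 0 < L := Real.log_pos ((one_lt_div hA₀).2 (by linarith))
  -- The radius at which the tail bound equals `μ(A) ^ 2`.
  set r := (L / (b / 2)) ^ (1 / p) with hr
  have hr_pos : 0 < r := by positivity
  have hrp : r ^ p = L / (b / 2) := by
    rw [hr, one_div, Real.rpow_inv_rpow (by positivity) hp.ne']
  have hr₀r : r₀ ≤ r := by
    rw [← Real.rpow_le_rpow_iff hr₀ hr_pos.le hp, hrp, le_div_iff₀ (by positivity)]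
    rw [hAL, Real.exp_le_exp] at hAr₀
    linarith
  have hball : μ.real (Metric.ball 0 r)ᶜ ≤ μ.real A ^ 2 := by
    have hcompl : (Metric.ball (0 : E) r)ᶜ = {x | r ≤ ‖x‖} := by ext; simp
    have hexp : Real.exp (-(b * r ^ p)) = μ.real A ^ 2 := by
      rw [hrp, hAL, ← Real.exp_nat_mul]
      congr 1
      field_simp
      norm_num
    rw [hcompl, ← hexp]
    exact ENNReal.toReal_le_of_le_ofReal (by positivity) (htail r hr₀r)
  convert hμ.ofReal_mul_log_div_radius_le_minkContent hA hA₀ hA₄ hr_pos hball using 2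
  rw [← hL, hr, Real.div_rpow hL₀.le (by positivity), Real.rpow_sub hL₀, Real.rpow_one]
  field_simp

end IsLogConcaveMeasure

end SeminormedSpace

theorem small_set_isoperimetry_logconcave_general {c K p₀ P : ℝ} (hc : 0 < c) (hK : 0 ≤ K)
    (hp₀ : 0 < p₀) :
    ∃ c' C' : ℝ, 0 < c' ∧ 0 < C' ∧
      ∀ (E : Type*) [SeminormedAddCommGroup E] [NormedSpace ℝ E] [MeasurableSpace E]
        [OpensMeasurableSpace E] (N : ℝ), 1 ≤ N → ∀ p : ℝ, p₀ ≤ p → p ≤ P →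
      ∀ r₀ : ℝ, 0 ≤ r₀ → r₀ * N ^ ((2 - p) / (2 * p)) ≤ K →
      ∀ (μ : Measure E) [IsProbabilityMeasure μ], IsLogConcaveMeasure μ →
      (∀ r : ℝ, r₀ ≤ r → μ {x | r ≤ ‖x‖} ≤ ENNReal.ofReal (Real.exp (-(c * N * r ^ p)))) →
      ∀ A : Set E, MeasurableSet A →
        μ A < ENNReal.ofReal (Real.exp (-(C' * N ^ (p / 2)))) →
        ENNReal.ofReal (c' * N ^ (1 / p) * μ.real A * Real.log (1 / μ.real A) ^ (1 - 1 / p)) ≤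
          minkContent μ A := by
  refine ⟨min 1 (c / 2) ^ (1 / p₀) / 8, c * (1 + K) ^ P + 3, by positivity, by positivity, ?_⟩
  intro E _ _ _ _ N hN p hp₀p hpP r₀ hr₀ hr₀K μ _ hμ htail A hA hAsmall
  have hp : 0 < p := hp₀.trans_le hp₀p
  have hNp : 1 ≤ N ^ (p / 2) := Real.one_le_rpow hN (by positivity)
  have hAexp : μ.real A ≤ Real.exp (-((c * (1 + K) ^ P + 3) * N ^ (p / 2))) :=
    ENNReal.toReal_le_of_le_ofReal (by positivity) hAsmall.le
  have hcK : 0 ≤ c * (1 + K) ^ P := by positivity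
  have hA₄ : μ.real A ≤ 1 / 4 := calc
    μ.real A ≤ Real.exp (-3) := hAexp.trans (Real.exp_le_exp.2 (by nlinarith))
    _ ≤ 1 / 4 := by
      rw [Real.exp_neg, ← one_div]
      exact one_div_le_one_div_of_le (by norm_num) (by linarith [Real.add_one_le_exp (3 : ℝ)])
  have hAr₀ : μ.real A ≤ Real.exp (-(c * N * r₀ ^ p / 2)) := by
    refine hAexp.trans (Real.exp_le_exp.2 (neg_le_neg ?_))
    have hrate : c * (N * r₀ ^ p) ≤ c * ((1 + K) ^ P * N ^ (p / 2)) := by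
      refine mul_le_mul_of_nonneg_left ?_ hc.le
      exact (mul_rpow_le_rpow_mul_rpow_half (by linarith) hr₀ hp hr₀K).trans
        (by gcongr; exact rpow_le_one_add_rpow hK hp.le hpP)
    have hrate₀ : 0 ≤ c * N * r₀ ^ p := by positivity
    linarith
  refine (ENNReal.ofReal_le_ofReal ?_).trans
    (hμ.ofReal_mul_log_rpow_le_minkContent_of_tail (by positivity) hp hr₀ htail hA hA₄ hAr₀)
  have hlog : 0 ≤ Real.log (1 / μ.real A) := by
    rw [one_div, Real.log_inv]
    linarith [Real.log_nonpos measureReal_nonneg (measureReal_le_one (μ := μ) (s := A))]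
  have hconst := min_one_rpow_le_rpow (half_pos hc) (one_div_pos.2 hp).le
    (one_div_le_one_div_of_le hp₀ hp₀p)
  rw [mul_div_right_comm c N 2, Real.mul_rpow (by positivity) (by positivity), mul_div_right_comm]
  gcongr

/-- Proposition 1, abstract form: a log-concave probability
measure `μ` on `ℝⁿ` with Euclidean tail bound `μ{‖x‖₂ ≥ r} ≤ exp(-c n r^p)` for
`r ≥ r₀` satisfies, for constants `c', C' > 0` depending only on `c` and
`r₀ n^{(2-p)/(2p)}`, the isoperimetric inequality
`μ⁺(A) ≥ c' n^{1/p} μ(A) log^{1-1/p}(1/μ(A))` whenever `μ(A) < exp(-C' n^{p/2})`. -/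
theorem small_set_isoperimetry_logconcave (c K : ℝ) (hc : 0 < c) (hK : 0 < K) :
    ∃ c' C' : ℝ, 0 < c' ∧ 0 < C' ∧
      ∀ (n : ℕ), 1 ≤ n → ∀ (p : ℝ), 1 ≤ p → p ≤ 2 →
      ∀ (r₀ : ℝ), 0 < r₀ → r₀ * (n : ℝ) ^ ((2 - p) / (2 * p)) = K →
      ∀ (μ : Measure (EuclideanSpace ℝ (Fin n))), IsProbabilityMeasure μ →
      (∀ (A B : Set (EuclideanSpace ℝ (Fin n))), MeasurableSet A → MeasurableSet B →
        ∀ t : ℝ, 0 < t → t < 1 →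
          μ ((1 - t) • A + t • B) ≥ μ A ^ (1 - t) * μ B ^ t) →
      (∀ r : ℝ, r₀ ≤ r →
        μ {x | r ≤ ‖x‖} ≤ ENNReal.ofReal (Real.exp (-(c * n * r ^ p)))) →
      ∀ A : Set (EuclideanSpace ℝ (Fin n)), MeasurableSet A →
        μ A < ENNReal.ofReal (Real.exp (-(C' * (n : ℝ) ^ (p / 2)))) →
        minkContent μ A ≥
          ENNReal.ofReal (c' * (n : ℝ) ^ ((1 : ℝ) / p) * (μ A).toReal *
            (Real.log (1 / (μ A).toReal)) ^ (1 - 1 / p)) := by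
  obtain ⟨c', C', hc', hC', h⟩ :=
    small_set_isoperimetry_logconcave_general (p₀ := 1) (P := 2) hc hK.le one_pos
  exact ⟨c', C', hc', hC', fun n hn p hp₁ hp₂ r₀ hr₀ hr₀K μ _ => h _ n (by exact_mod_cast hn) p
    hp₁ hp₂ r₀ hr₀.le hr₀K.le μ⟩
end
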